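/- For every base b ≥ 3, every natural number can be reduced to a single base-b digit (a number less than b) in at most three applications of partition and sum in base b. -/

import Mathlib

/-- `PartSum b n m` : `m` is obtained from `n` by splitting the base-`b` digit string of
`n` into consecutive nonempty blocks and summing the base-`b` values of the blocks. -/
def PartSum (b n m : ℕ) : Prop :=
  ∃ L : List (List ℕ), (∀ l ∈ L, l ≠ []) ∧ L.flatten = Nat.digits b n ∧
    m = (L.map (fun l => Nat.ofDigits b l)).sum

/-- `m` is a block sum of the (little-endian) digit list `l`. -/
def LSum (b : ℕ) (d : List ℕ) (m : ℕ) : Prop :=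
  ∃ L : List (List ℕ), (∀ l ∈ L, l ≠ []) ∧ L.flatten = d ∧
    m = (L.map (fun l => Nat.ofDigits b l)).sum

theorem LSum.nil (b : ℕ) : LSum b [] 0 := ⟨[], by simp, by simp, by simp⟩

theorem LSum.one {b : ℕ} {l : List ℕ} {m : ℕ} (x : ℕ) (h : LSum b l m) :
    LSum b (x :: l) (x + m) := by
  obtain ⟨L, h1, h2, h3⟩ := h
  refine ⟨[x] :: L, ?_, by simp [h2], by simp [h3]⟩
  intro l hl
  rcases List.mem_cons.1 hl with rfl | hl
  · simp
  · exact h1 l hl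

theorem LSum.two {b : ℕ} {l : List ℕ} {m : ℕ} (x y : ℕ) (h : LSum b l m) :
    LSum b (x :: y :: l) (x + b * y + m) := by
  obtain ⟨L, h1, h2, h3⟩ := h
  refine ⟨[x, y] :: L, ?_, by simp [h2], by simp [h3, Nat.ofDigits_cons]⟩
  intro l hl
  rcases List.mem_cons.1 hl with rfl | hl
  · simp
  · exact h1 l hl

theorem LSum.all (b : ℕ) (l : List ℕ) : LSum b l l.sum := by
  induction l with
  | nil => exact LSum.nil b
  | cons x l ih => simpa using ih.one x

/-- Sum obtained by grouping consecutive digits in pairs from the low end. -/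
def pairSum (b : ℕ) : List ℕ → ℕ
  | [] => 0
  | [x] => x
  | x :: y :: l => x + b * y + pairSum b l

theorem LSum.pair (b : ℕ) : ∀ l : List ℕ, LSum b l (pairSum b l)
  | [] => LSum.nil b
  | [x] => by simpa [pairSum] using (LSum.nil b).one x
  | x :: y :: l => (LSum.pair b l).two x y

theorem pairSum_add (b : ℕ) (l : List ℕ) : ∀ x,
    pairSum b (x :: l) + pairSum b l + b * x = (b + 1) * (x + l.sum) := by
  induction l with
  | nil => intro x; simp [pairSum]; ring
  | cons y l ih =>
    intro x
    have := ih y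
    simp only [pairSum, List.sum_cons]
    nlinarith

theorem greedy (b : ℕ) (hb : 3 ≤ b) : ∀ (l : List ℕ) (_ : ∀ x ∈ l, x < b) (A : ℕ)
    (_ : A ≤ pairSum b l),
    ∃ m, LSum b l m ∧ A ≤ m ∧ (m < A + (b - 1) ^ 2 ∨ m = l.sum)
  | [], _, A, hA => ⟨0, LSum.nil b, by simpa [pairSum] using hA, by simp⟩
  | [x], _, A, hA => ⟨x, by simpa using LSum.all b [x], by simpa [pairSum] using hA, by simp⟩
  | x :: y :: l, hl, A, hA => by
    by_cases h0 : A ≤ (x :: y :: l).sum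
    · exact ⟨_, LSum.all b _, h0, Or.inr rfl⟩
    simp only [List.sum_cons, not_le] at h0
    by_cases h1 : A ≤ x + y + pairSum b l
    · obtain ⟨m, hm, h2, h3⟩ := greedy b hb l (fun z hz => hl z (by simp [hz])) (A - (x + y))
        (by omega)
      refine ⟨x + (y + m), (hm.one y).one x, by omega, ?_⟩
      rcases h3 with h3 | h3
      · left; omega
      · right; simp [h3]
    · refine ⟨_, LSum.pair b _, hA, Or.inl ?_⟩
      have hy : y < b := hl y (by simp)
      obtain ⟨c, rfl⟩ : ∃ c, b = c + 1 := ⟨b - 1, by omega⟩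
      have : c * y ≤ c * c := Nat.mul_le_mul_left _ (by omega)
      simp only [pairSum, Nat.add_sub_cancel]
      nlinarith

theorem reach (b : ℕ) (hb : 3 ≤ b) (l : List ℕ) (hl : ∀ x ∈ l, x < b) (A : ℕ)
    (h1 : 2 * A + (b - 1) ^ 2 ≤ l.sum * (b + 1)) (h2 : l.sum < A + (b - 1) ^ 2) :
    ∃ m, LSum b l m ∧ A ≤ m ∧ m < A + (b - 1) ^ 2 := by
  by_cases h0 : A ≤ l.sum
  · exact ⟨_, LSum.all b l, h0, h2⟩
  cases l with
  | nil => exfalso; simp at h1 h0; omega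
  | cons x l =>
    have hp := pairSum_add b l x
    by_cases hA : A ≤ pairSum b (x :: l)
    · obtain ⟨m, hm, h3, h4⟩ := greedy b hb _ hl A hA
      exact ⟨m, hm, h3, by rcases h4 with h4 | h4 <;> omega⟩
    · have hx : x < b := hl x (by simp)
      have hA' : A - x ≤ pairSum b l := by
        by_contra hc
        obtain ⟨c, rfl⟩ : ∃ c, b = c + 1 := ⟨b - 1, by omega⟩
        have : c * x ≤ c * c := Nat.mul_le_mul_left _ (by omega)
        simp only [Nat.add_sub_cancel, List.sum_cons] at h1
        have h5 : pairSum (c+1) l + x < A := by omega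
        nlinarith
      obtain ⟨m, hm, h3, h4⟩ := greedy b hb l (fun z hz => hl z (by simp [hz])) _ hA'
      simp only [List.sum_cons] at h0 h2
      exact ⟨x + m, hm.one x, by omega, by rcases h4 with h4 | h4 <;> omega⟩

theorem merge_one (b : ℕ) (hb : 3 ≤ b) (l : List ℕ) : ∀ x, 0 < l.sum →
    ∃ d ∈ l, 1 ≤ d ∧ LSum b (x :: l) (x + l.sum + (b - 1) * d) := by
  induction l with
  | nil => intro x h; simp at h
  | cons y l ih =>
    intro x h
    by_cases hy : y = 0
    · obtain ⟨d, hd, h1, h2⟩ := ih y (by simpa [hy] using h)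
      refine ⟨d, by simp [hd], h1, ?_⟩
      have := h2.one x
      simpa [add_assoc] using this
    · refine ⟨y, by simp, by omega, ?_⟩
      have := (LSum.all b l).two x y
      obtain ⟨c, rfl⟩ : ∃ c, b = c + 1 := ⟨b - 1, by omega⟩
      convert this using 1
      simp; ring

/-- digit sum -/
def dsum (b n : ℕ) : ℕ := (Nat.digits b n).sum

theorem dsum_add_mul (b : ℕ) (hb : 3 ≤ b) (y q : ℕ) (hy : y < b) :
    dsum b (y + b * q) = y + dsum b q := by
  unfold dsum
  by_cases h : y = 0 ∧ q = 0
  · simp [h.1, h.2]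
  · rw [Nat.digits_add b (by omega) y q hy (by omega)]
    simp

theorem dsum_lt (b : ℕ) (hb : 3 ≤ b) (y : ℕ) (hy : y < b) : dsum b y = y := by
  have := dsum_add_mul b hb y 0 hy
  simpa [dsum] using this

theorem dsum_mul_pow (b : ℕ) (hb : 3 ≤ b) (c k : ℕ) (hc : c < b) : dsum b (c * b ^ k) = c := by
  induction k with
  | zero => simpa using dsum_lt b hb c hc
  | succ k ih =>
    have := dsum_add_mul b hb 0 (c * b ^ k) (by omega)
    rw [ih] at this
    rw [pow_succ, show c * (b ^ k * b) = 0 + b * (c * b ^ k) by ring, this, zero_add]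

theorem dsum_two (b : ℕ) (hb : 3 ≤ b) (x y : ℕ) (hx : x < b) (hy : y < b) :
    dsum b (y + b * x) = y + x := by
  rw [dsum_add_mul b hb y x hy, dsum_lt b hb x hx]

theorem good_small (b : ℕ) (hb : 3 ≤ b) (s : ℕ) (hs : s ≤ 3 * b - 4) (h : s ≠ 2 * b - 1) :
    dsum b s < b := by
  by_cases h1 : s < b
  · rwa [dsum_lt b hb s h1]
  by_cases h2 : s < 2 * b
  · have := dsum_two b hb 1 (s - b) (by omega) (by omega)
    rw [show s - b + b * 1 = s by omega] at this
    omega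
  · have := dsum_two b hb 2 (s - 2 * b) (by omega) (by omega)
    rw [show s - 2 * b + b * 2 = s by omega] at this
    omega

theorem good_window (b : ℕ) (hb : 3 ≤ b) (c k m : ℕ) (hc : c = 1 ∨ c = 2)
    (h1 : c * b ^ (k + 2) ≤ m) (h2 : m < c * b ^ (k + 2) + (b - 1) ^ 2) :
    dsum b (dsum b m) < b := by
  obtain ⟨t, rfl⟩ := Nat.exists_eq_add_of_le h1
  have ht : t < (b - 1) ^ 2 := by omega
  have hy : t % b < b := Nat.mod_lt _ (by omega)
  have hdm := Nat.mod_add_div t b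
  generalize t % b = y at hy hdm
  generalize t / b = x at hdm
  obtain ⟨e, rfl⟩ : ∃ e, b = e + 2 := ⟨b - 2, by omega⟩
  have hx : x ≤ e := by
    by_contra hx
    have : (e + 2) * (e + 1) ≤ (e + 2) * x := Nat.mul_le_mul_left _ (by omega)
    simp only [Nat.add_sub_cancel, show e + 2 - 1 = e + 1 by omega] at ht
    nlinarith
  have hxy : x + y ≤ 2 * e := by
    by_cases hxe : x = e
    · subst hxe
      simp only [show x + 2 - 1 = x + 1 by omega] at ht
      have : y < 1 := by nlinarith
      omega
    · omega
  have hd : dsum (e + 2) (c * (e + 2) ^ (k + 2) + t) = y + (x + c) := by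
    rw [← dsum_mul_pow (e + 2) hb c k (by omega), ← dsum_add_mul _ hb x _ (by omega),
      ← dsum_add_mul _ hb y _ hy, dsum_mul_pow (e + 2) hb c k (by omega), ← hdm]
    congr 1
    ring
  rw [hd]
  exact good_small _ hb _ (by omega) (by omega)

theorem exists_target (b : ℕ) (hb : 3 ≤ b) (s : ℕ) (hs : 3 * b - 3 ≤ s) :
    ∃ c k, (c = 1 ∨ c = 2) ∧ 2 * (c * b ^ (k + 2)) + (b - 1) ^ 2 ≤ s * (b + 1) ∧
      s < c * b ^ (k + 2) + (b - 1) ^ 2 := by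
  have hex : ∃ k, s * (b + 1) < 2 * b ^ (k + 2) + (b - 1) ^ 2 := by
    refine ⟨s * (b + 1), ?_⟩
    have h1 := Nat.lt_pow_self (n := s * (b + 1)) (show 1 < b by omega)
    have h2 : b ^ (s * (b + 1)) ≤ b ^ (s * (b + 1) + 2) :=
      Nat.pow_le_pow_right (by omega) (by omega)
    omega
  classical
  have hf := Nat.find_spec hex
  have hmin := fun j => Nat.find_min hex (m := j)
  generalize Nat.find hex = K at hf hmin
  obtain ⟨e, rfl⟩ : ∃ e, b = e + 3 := ⟨b - 3, by omega⟩
  simp only [show e + 3 - 1 = e + 2 by omega] at *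
  cases K with
  | zero =>
    exfalso
    have : (3 * e + 6) * (e + 3 + 1) ≤ s * (e + 3 + 1) := Nat.mul_le_mul_right _ (by omega)
    simp only [zero_add] at hf
    nlinarith
  | succ k =>
    have h1 := hmin k (by omega)
    rw [not_lt] at h1
    have hp : (e + 3) ^ (k + 1 + 2) = (e + 3) * (e + 3) ^ (k + 2) := by ring
    rw [hp] at hf
    clear hmin hp hex
    generalize hB : (e + 3) ^ (k + 2) = B at hf h1
    by_cases h2 : 2 * (2 * B) + (e + 2) ^ 2 ≤ s * (e + 3 + 1)
    · refine ⟨2, k, Or.inr rfl, ?_⟩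
      rw [hB]
      refine ⟨h2, ?_⟩
      by_contra hc
      have h3 : (2 * B + (e + 2) ^ 2) * (e + 3 + 1) ≤ s * (e + 3 + 1) :=
        Nat.mul_le_mul_right _ (by omega)
      nlinarith [Nat.zero_le (B * e), Nat.zero_le ((e + 2) ^ 2 * e)]
    · refine ⟨1, k, Or.inl rfl, ?_⟩
      rw [hB]
      refine ⟨by omega, ?_⟩
      by_contra hc
      have h3 : (B + (e + 2) ^ 2) * (e + 3 + 1) ≤ s * (e + 3 + 1) :=
        Nat.mul_le_mul_right _ (by omega)
      nlinarith [Nat.zero_le (B * e), Nat.zero_le ((e + 2) ^ 2 * e)]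

theorem exists_good (b : ℕ) (hb : 3 ≤ b) (n : ℕ) :
    ∃ m, PartSum b n m ∧ dsum b (dsum b m) < b := by
  have hl : ∀ x ∈ Nat.digits b n, x < b := fun x hx => Nat.digits_lt_base (by omega) hx
  by_cases h1 : (Nat.digits b n).sum = 2 * b - 1
  · have : ∃ m, LSum b (Nat.digits b n) m ∧ dsum b (dsum b m) < b := by
      generalize Nat.digits b n = l at *
      cases l with
      | nil => simp at h1; omega
      | cons x l =>
        have hx := hl x (by simp)
        simp only [List.sum_cons] at h1
        obtain ⟨d, hd, hd1, hm⟩ := merge_one b hb l x (by omega)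
        refine ⟨_, hm, ?_⟩
        have hdb := hl d (by simp [hd])
        rw [h1]
        have e1 : 2 * b - 1 + (b - 1) * d = (b - 1 - d) + b * (d + 1) := by
          obtain ⟨e, rfl⟩ : ∃ e, b = d + 1 + e := ⟨b - d - 1, by omega⟩
          rw [show d + 1 + e - 1 - d = e by omega, show d + 1 + e - 1 = d + e by omega,
            show 2 * (d + 1 + e) - 1 = 2 * d + 2 * e + 1 by omega]
          ring
        rw [e1, dsum_add_mul b hb _ _ (by omega)]
        have hb1 : dsum b b = 1 := by simpa using dsum_mul_pow b hb 1 1 (by omega)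
        by_cases hd2 : d + 1 = b
        · rw [hd2, hb1, show b - 1 - d + 1 = 1 by omega, dsum_lt b hb 1 (by omega)]
          omega
        · rw [dsum_lt b hb (d + 1) (by omega), show b - 1 - d + (d + 1) = b by omega, hb1]
          omega
    exact this
  by_cases h2 : (Nat.digits b n).sum ≤ 3 * b - 4
  · refine ⟨_, LSum.all b _, ?_⟩
    have h3 := good_small b hb _ h2 h1
    rwa [dsum_lt b hb _ h3]
  · obtain ⟨c, k, hc, h3, h4⟩ := exists_target b hb (Nat.digits b n).sum (by omega)
    obtain ⟨m, hm, h5, h6⟩ := reach b hb _ hl _ h3 h4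
    exact ⟨m, hm, good_window b hb c k m hc h5 h6⟩

theorem stmt_6 (b : ℕ) (hb : 3 ≤ b) (n : ℕ) :
    n < b ∨
    (∃ m₁, PartSum b n m₁ ∧ m₁ < b) ∨
    (∃ m₁ m₂, PartSum b n m₁ ∧ PartSum b m₁ m₂ ∧ m₂ < b) ∨
    (∃ m₁ m₂ m₃, PartSum b n m₁ ∧ PartSum b m₁ m₂ ∧ PartSum b m₂ m₃ ∧ m₃ < b) := by
  obtain ⟨m, hm, h⟩ := exists_good b hb n
  exact Or.inr (Or.inr (Or.inr ⟨m, dsum b m, dsum b (dsum b m), hm, LSum.all b _, LSum.all b _, h⟩))
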